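/- arXiv:1903.10386 — 2 statements merged into one kernel-verified Lean document; each statement's English description precedes it below -/
import Mathlib

section
/- Let G be a bidirected graph with vertices 1,…,t and let 𝒜 and ℬ be complex matrix representations of G of the same dimension (n₁,…,n_t). Then 𝒜 and ℬ are isomorphic if and only if there exist two families of invertible matrices P_i ∈ GL(n_i,ℂ) and R_i ∈ GL(n_i,ℂ) (i = 1,…,t) such that: for each directed edge β: i→j, P_j ℬ_β = 𝒜_β P_i and R_i ℬ_βᵀ = 𝒜_βᵀ R_j; for each undirected edge α: i—j, R_i ℬ_αᵀ = 𝒜_αᵀ P_j and R_j ℬ_α = 𝒜_α P_i; and for each bidirected edge γ: i↔j, P_i ℬ_γᵀ = 𝒜_γᵀ R_j and P_j ℬ_γ = 𝒜_γ R_i. -/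
/-- A bidirected graph with vertex set `Fin t`: it has finite sets of undirected
edges, directed edges, and bidirected edges (loops and multiple edges allowed);
each edge has a source and a target vertex. -/
structure BidirGraph (t : ℕ) where
  UEdge : Type
  DEdge : Type
  BEdge : Type
  [instFintypeU : Fintype UEdge]
  [instFintypeD : Fintype DEdge]
  [instFintypeB : Fintype BEdge]
  usrc : UEdge → Fin t
  utgt : UEdge → Fin t
  dsrc : DEdge → Fin t
  dtgt : DEdge → Fin t
  bsrc : BEdge → Fin t
  btgt : BEdge → Fin t

attribute [instance] BidirGraph.instFintypeU BidirGraph.instFintypeD BidirGraph.instFintypeB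

/-- A complex matrix representation of a bidirected graph `G` of dimension `n`:
to each edge `e : i ⟶ j` (undirected, directed or bidirected) it assigns a
matrix in `ℂ^{n j × n i}`. -/
structure BidirRep {t : ℕ} (G : BidirGraph t) (n : Fin t → ℕ) where
  u : ∀ e : G.UEdge, Matrix (Fin (n (G.utgt e))) (Fin (n (G.usrc e))) ℂ
  d : ∀ e : G.DEdge, Matrix (Fin (n (G.dtgt e))) (Fin (n (G.dsrc e))) ℂ
  b : ∀ e : G.BEdge, Matrix (Fin (n (G.btgt e))) (Fin (n (G.bsrc e))) ℂ

/-- A family `S` of invertible matrices is an isomorphism `ℬ → 𝒜` of representations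
of a bidirected graph if `ℬ_α = S_jᵀ * 𝒜_α * S_i` for each undirected edge `α : i — j`,
`S_j * ℬ_β = 𝒜_β * S_i` for each directed edge `β : i ⟶ j`, and
`𝒜_γ = S_j * ℬ_γ * S_iᵀ` for each bidirected edge `γ : i ↔ j`. -/
def IsBidirRepIso {t : ℕ} {G : BidirGraph t} {n : Fin t → ℕ}
    (S : ∀ i : Fin t, Matrix (Fin (n i)) (Fin (n i)) ℂ) (ℬ 𝒜 : BidirRep G n) : Prop :=
  (∀ i, IsUnit (S i)) ∧
  (∀ e : G.UEdge, ℬ.u e = (S (G.utgt e)).transpose * 𝒜.u e * S (G.usrc e)) ∧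
  (∀ e : G.DEdge, S (G.dtgt e) * ℬ.d e = 𝒜.d e * S (G.dsrc e)) ∧
  (∀ e : G.BEdge, 𝒜.b e = S (G.btgt e) * ℬ.b e * (S (G.bsrc e)).transpose)

open Polynomial in
theorem aux_newton (e : ℂ[X]) (f0 : ℂ[X]) (h : e = X * f0 ^ 2 - 1) (k : ℕ) :
    ∃ f : ℂ[X], e ^ (2 ^ k) ∣ X * f ^ 2 - 1 := by
  induction k with
  | zero => exact ⟨f0, by simp [h]⟩
  | succ k ih =>
    obtain ⟨f, g, hg⟩ := ih
    refine ⟨f * (1 - C (1 / 2) * (X * f ^ 2 - 1)),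
      g ^ 2 * (C (1 / 4) * (X * f ^ 2 - 1) - C (3 / 4)), ?_⟩
    have h2 : e ^ 2 ^ (k + 1) * (g ^ 2 * (C (1 / 4) * (X * f ^ 2 - 1) - C (3 / 4)))
        = (X * f ^ 2 - 1) ^ 2 * (C (1 / 4) * (X * f ^ 2 - 1) - C (3 / 4)) := by
      rw [hg]; ring
    rw [h2]
    have h4 : (C (1 / 2 : ℂ)) = 2 * C (1 / 4) := by
      rw [show (2 : ℂ[X]) = C 2 from rfl, ← C_mul]; norm_num
    have h3 : (C (3 / 4 : ℂ)) = 3 * C (1 / 4) := by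
      rw [show (3 : ℂ[X]) = C 3 from rfl, ← C_mul]; norm_num
    have h1 : 4 * (C (1 / 4 : ℂ)) = 1 := by
      rw [show (4 : ℂ[X]) = C 4 from rfl, ← C_mul]; norm_num
    rw [h4, h3]
    generalize C (1 / 4 : ℂ) = c at *
    generalize (X : ℂ[X]) = x at *
    linear_combination (-(x * f ^ 2 - 1) + c * (x * f ^ 2 - 1) ^ 2 + c * (x * f ^ 2 - 1) ^ 3) * h1

open Polynomial in
theorem aux_dvd (q : ℂ[X]) (hq : q ≠ 0) (e : ℂ[X]) (h : ∀ z, q.IsRoot z → e.IsRoot z) :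
    q ∣ e ^ q.natDegree := by
  have hs := IsAlgClosed.splits q
  rw [hs.natDegree_eq_card_roots]
  have h1 := hs.eq_prod_roots
  have key : ∀ m : Multiset ℂ, (∀ z ∈ m, e.IsRoot z) →
      (m.map (fun a => X - C a)).prod ∣ e ^ m.card := by
    intro m
    induction m using Multiset.induction_on with
    | empty => simp
    | cons a m ih =>
      intro hm
      rw [Multiset.map_cons, Multiset.prod_cons, Multiset.card_cons, pow_succ']
      exact mul_dvd_mul (dvd_iff_isRoot.2 (hm a (by simp)))
        (ih fun z hz => hm z (Multiset.mem_cons_of_mem hz))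
  have h2 := key q.roots (fun z hz => h z ((mem_roots hq).1 hz))
  conv_lhs => rw [h1]
  exact (C_mul_dvd (leadingCoeff_ne_zero.2 hq)).2 h2

open Polynomial in
theorem aux_sqrt (q : ℂ[X]) (hq : q.eval 0 ≠ 0) : ∃ f : ℂ[X], q ∣ X * f ^ 2 - 1 := by
  have hq0 : q ≠ 0 := by rintro rfl; simp at hq
  have hc : ∀ z : ℂ, ∃ c : ℂ, z ≠ 0 → z * c ^ 2 = 1 := by
    intro z
    obtain ⟨c, hc⟩ := IsAlgClosed.exists_pow_nat_eq (z⁻¹) (n := 2) (by norm_num)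
    exact ⟨c, fun hz => by rw [hc, mul_inv_cancel₀ hz]⟩
  choose c hc using hc
  let f0 := Lagrange.interpolate q.roots.toFinset id c
  obtain ⟨f, hf⟩ := aux_newton _ f0 rfl q.natDegree
  refine ⟨f, (aux_dvd q hq0 _ ?_).trans ((pow_dvd_pow _ Nat.lt_two_pow_self.le).trans hf)⟩
  intro z hz
  have hz0 : z ≠ 0 := by rintro rfl; exact hq hz
  have : f0.eval z = c z :=
    Lagrange.eval_interpolate_at_node (s := q.roots.toFinset) (v := id) c
      (Set.injOn_id _) (by simpa using ⟨hq0, hz⟩)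
  simp [IsRoot, this, hc z hz0]

open Polynomial in
theorem aux_family {t : ℕ} (n : Fin t → ℕ) (M : ∀ i, Matrix (Fin (n i)) (Fin (n i)) ℂ)
    (hM : ∀ i, IsUnit (M i)) :
    ∃ f : ℂ[X], ∀ i, M i * (aeval (M i) f * aeval (M i) f) = 1 := by
  obtain ⟨f, hf⟩ := aux_sqrt (∏ i, (M i).charpoly) (by
    rw [eval_prod, Finset.prod_ne_zero_iff]
    intro i _
    have := (Matrix.isUnit_iff_isUnit_det _).1 (hM i)
    rw [Matrix.eval_charpoly]
    simpa [Matrix.det_neg] using this.ne_zero)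
  refine ⟨f, fun i => ?_⟩
  obtain ⟨g, hg⟩ := (Finset.dvd_prod_of_mem (fun i => (M i).charpoly) (Finset.mem_univ i)).trans hf
  have := congrArg (aeval (M i)) hg
  simp only [map_sub, map_mul, map_pow, aeval_X, map_one, Matrix.aeval_self_charpoly, zero_mul] at this
  rw [← pow_two]
  exact sub_eq_zero.1 this

open Polynomial in
theorem aux_comm {a b : ℕ} (M : Matrix (Fin a) (Fin a) ℂ) (N : Matrix (Fin b) (Fin b) ℂ)
    (B : Matrix (Fin a) (Fin b) ℂ) (h : M * B = B * N) (f : ℂ[X]) :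
    aeval M f * B = B * aeval N f := by
  have hp : ∀ k : ℕ, M ^ k * B = B * N ^ k := by
    intro k
    induction k with
    | zero => simp
    | succ k ih => rw [pow_succ, Matrix.mul_assoc, h, ← Matrix.mul_assoc, ih, Matrix.mul_assoc, ← pow_succ]
  induction f using Polynomial.induction_on' with
  | add p q hp hq => simp [Matrix.add_mul, Matrix.mul_add, hp, hq]
  | monomial k c => simp [aeval_monomial, ← Algebra.smul_def, hp]

open Polynomial in
theorem aux_transpose {a : ℕ} (M : Matrix (Fin a) (Fin a) ℂ) (f : ℂ[X]) :
    aeval M.transpose f = (aeval M f).transpose := by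
  induction f using Polynomial.induction_on' with
  | add p q hp hq => simp [hp, hq]
  | monomial k c => simp [aeval_monomial, ← Algebra.smul_def, Matrix.transpose_pow]

/-- Roiter–Sergeichuk reduction: two complex matrix representations `𝒜`, `ℬ` of a
bidirected graph `G` are isomorphic if and only if the induced representations of the
associated quiver `G̲` are isomorphic, i.e. iff there exist families of invertible
matrices `P i`, `R i` such that for each directed edge `β : i → j`:
`P_j ℬ_β = 𝒜_β P_i` and `R_i ℬ_βᵀ = 𝒜_βᵀ R_j`; for each undirected edge `α : i — j`:
`R_i ℬ_αᵀ = 𝒜_αᵀ P_j` and `R_j ℬ_α = 𝒜_α P_i`; and for each bidirected edge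
`γ : i ↔ j`: `P_i ℬ_γᵀ = 𝒜_γᵀ R_j` and `P_j ℬ_γ = 𝒜_γ R_i`. -/
theorem bidir_rep_iso_iff_doubled_quiver_iso {t : ℕ} (G : BidirGraph t) (n : Fin t → ℕ)
    (𝒜 ℬ : BidirRep G n) :
    (∃ S, IsBidirRepIso S ℬ 𝒜) ↔
      ∃ P R : ∀ i : Fin t, Matrix (Fin (n i)) (Fin (n i)) ℂ,
        (∀ i, IsUnit (P i)) ∧ (∀ i, IsUnit (R i)) ∧
        (∀ e : G.DEdge,
          P (G.dtgt e) * ℬ.d e = 𝒜.d e * P (G.dsrc e) ∧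
          R (G.dsrc e) * (ℬ.d e).transpose = (𝒜.d e).transpose * R (G.dtgt e)) ∧
        (∀ e : G.UEdge,
          R (G.usrc e) * (ℬ.u e).transpose = (𝒜.u e).transpose * P (G.utgt e) ∧
          R (G.utgt e) * ℬ.u e = 𝒜.u e * P (G.usrc e)) ∧
        (∀ e : G.BEdge,
          P (G.bsrc e) * (ℬ.b e).transpose = (𝒜.b e).transpose * R (G.btgt e) ∧
          P (G.btgt e) * ℬ.b e = 𝒜.b e * R (G.bsrc e)) := by
  constructor
  · rintro ⟨S, hS, hu, hd, hb⟩
    have hdet : ∀ i, IsUnit (S i).det := fun i => (Matrix.isUnit_iff_isUnit_det _).1 (hS i)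
    have hdT : ∀ i, IsUnit (S i).transpose.det := fun i => by
      rw [Matrix.det_transpose]; exact hdet i
    have hl : ∀ i, (S i).transpose⁻¹ * (S i).transpose = 1 := fun i => Matrix.nonsing_inv_mul _ (hdT i)
    have hr : ∀ i, (S i).transpose * (S i).transpose⁻¹ = 1 := fun i => Matrix.mul_nonsing_inv _ (hdT i)
    have hl' : ∀ i m (Z : Matrix (Fin (n i)) (Fin m) ℂ),
        (S i).transpose⁻¹ * ((S i).transpose * Z) = Z := fun i m Z => by
      rw [← Matrix.mul_assoc, hl, Matrix.one_mul]
    refine ⟨S, fun i => (S i).transpose⁻¹, hS, fun i => ?_, fun e => ⟨hd e, ?_⟩, fun e => ⟨?_, ?_⟩,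
      fun e => ⟨?_, ?_⟩⟩
    · exact Matrix.isUnit_nonsing_inv_iff.2 ((Matrix.isUnit_iff_isUnit_det _).2 (hdT i))
    · have h := congrArg Matrix.transpose (hd e)
      simp only [Matrix.transpose_mul] at h
      calc _ = (S (G.dsrc e)).transpose⁻¹ * ((ℬ.d e).transpose *
              (S (G.dtgt e)).transpose) * (S (G.dtgt e)).transpose⁻¹ := by
            simp only [Matrix.mul_assoc, hr, Matrix.mul_one]
        _ = _ := by rw [h, hl']
    · rw [hu e]
      simp only [Matrix.transpose_mul, Matrix.transpose_transpose, hl']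
    · rw [hu e, Matrix.mul_assoc, hl']
    · rw [hb e]
      simp only [Matrix.transpose_mul, Matrix.transpose_transpose, Matrix.mul_assoc, hr, Matrix.mul_one]
    · rw [hb e]
      simp only [Matrix.mul_assoc, hr, Matrix.mul_one]
  · rintro ⟨P, R, hP, hR, hd, hu, hb⟩
    have hRT : ∀ i, IsUnit (R i).transpose := fun i => by
      rw [Matrix.isUnit_iff_isUnit_det, Matrix.det_transpose]
      exact (Matrix.isUnit_iff_isUnit_det _).1 (hR i)
    obtain ⟨f, hf⟩ := aux_family n (fun i => (R i).transpose * P i) (fun i => (hRT i).mul (hP i))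
    have hfY : ∀ i, IsUnit (Polynomial.aeval ((R i).transpose * P i) f) := fun i => by
      have h1 := hf i
      rw [← mul_assoc] at h1
      rw [Matrix.isUnit_iff_isUnit_det]
      exact Matrix.isUnit_det_of_left_inverse h1
    have hT : ∀ i, ((R i).transpose * P i).transpose = (P i).transpose * R i := fun i => by
      simp [Matrix.transpose_mul]
    refine ⟨fun i => P i * Polynomial.aeval ((R i).transpose * P i) f,
      fun i => (hP i).mul (hfY i), fun e => ?_, fun e => ?_, fun e => ?_⟩
    · obtain ⟨h1, h2⟩ := hu e
      have h1 := congrArg Matrix.transpose h1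
      simp only [Matrix.transpose_mul, Matrix.transpose_transpose] at h1
      have hc := aux_comm ((R (G.utgt e)).transpose * P (G.utgt e)).transpose
        ((R (G.usrc e)).transpose * P (G.usrc e)) (ℬ.u e) (by
          rw [hT, Matrix.mul_assoc, h2, ← Matrix.mul_assoc, ← h1, Matrix.mul_assoc]) f
      have hh := hf (G.usrc e)
      rw [aux_transpose] at hc
      calc ℬ.u e = ℬ.u e * (((R (G.usrc e)).transpose * P (G.usrc e)) *
              (Polynomial.aeval ((R (G.usrc e)).transpose * P (G.usrc e)) f *
               Polynomial.aeval ((R (G.usrc e)).transpose * P (G.usrc e)) f)) := by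
            rw [hh, Matrix.mul_one]
        _ = ℬ.u e * (Polynomial.aeval ((R (G.usrc e)).transpose * P (G.usrc e)) f *
              (((R (G.usrc e)).transpose * P (G.usrc e)) *
               Polynomial.aeval ((R (G.usrc e)).transpose * P (G.usrc e)) f)) := by
            have := aux_comm _ _ _ (rfl : ((R (G.usrc e)).transpose * P (G.usrc e)) * _ = _) f
            generalize Polynomial.aeval ((R (G.usrc e)).transpose * P (G.usrc e)) f = Y at *
            rw [← Matrix.mul_assoc Y, this, Matrix.mul_assoc _ Y Y]
        _ = (ℬ.u e * Polynomial.aeval ((R (G.usrc e)).transpose * P (G.usrc e)) f) *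
              (((R (G.usrc e)).transpose * P (G.usrc e)) *
               Polynomial.aeval ((R (G.usrc e)).transpose * P (G.usrc e)) f) := by
            rw [Matrix.mul_assoc (ℬ.u e)]
        _ = (Polynomial.aeval ((R (G.utgt e)).transpose * P (G.utgt e)) f).transpose *
              (ℬ.u e * (R (G.usrc e)).transpose) * P (G.usrc e) *
               Polynomial.aeval ((R (G.usrc e)).transpose * P (G.usrc e)) f := by
            rw [← hc]; simp only [Matrix.mul_assoc]
        _ = _ := by
            rw [h1]; simp only [Matrix.transpose_mul, Matrix.mul_assoc]
    · obtain ⟨h1, h2⟩ := hd e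
      have h2 := congrArg Matrix.transpose h2
      simp only [Matrix.transpose_mul, Matrix.transpose_transpose] at h2
      have hc := aux_comm ((R (G.dtgt e)).transpose * P (G.dtgt e))
        ((R (G.dsrc e)).transpose * P (G.dsrc e)) (ℬ.d e) (by
          rw [Matrix.mul_assoc, h1, ← Matrix.mul_assoc, ← h2, Matrix.mul_assoc]) f
      dsimp only
      rw [Matrix.mul_assoc, hc, ← Matrix.mul_assoc, h1, Matrix.mul_assoc]
    · obtain ⟨h1, h2⟩ := hb e
      have h1 := congrArg Matrix.transpose h1
      simp only [Matrix.transpose_mul, Matrix.transpose_transpose] at h1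
      have hc := aux_comm ((R (G.btgt e)).transpose * P (G.btgt e))
        ((R (G.bsrc e)).transpose * P (G.bsrc e)).transpose (ℬ.b e) (by
          rw [hT, Matrix.mul_assoc, h2, ← Matrix.mul_assoc, ← h1, Matrix.mul_assoc]) f
      rw [aux_transpose] at hc
      have hh := hf (G.bsrc e)
      -- cyclic rearrangement: P Y Y Rᵀ = 1
      have h3 : P (G.bsrc e) * (Polynomial.aeval ((R (G.bsrc e)).transpose * P (G.bsrc e)) f *
               Polynomial.aeval ((R (G.bsrc e)).transpose * P (G.bsrc e)) f) *
               (R (G.bsrc e)).transpose = 1 := by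
        rw [Matrix.mul_assoc] at hh
        exact mul_eq_one_comm.1 hh
      have h4 := congrArg Matrix.transpose h3
      simp only [Matrix.transpose_mul, Matrix.transpose_transpose, Matrix.transpose_one] at h4
      dsimp only
      generalize Polynomial.aeval ((R (G.bsrc e)).transpose * P (G.bsrc e)) f = Y at *
      rw [Matrix.mul_assoc (P (G.btgt e)), hc, ← Matrix.mul_assoc, h2, Matrix.transpose_mul]
      simp only [Matrix.mul_assoc] at h4 ⊢
      rw [h4, Matrix.mul_one]
end

section
/- For every nonsingular complex matrix M ∈ ℂ^{n×n} there exists a polynomial f ∈ ℂ[x] such that f(M)² = M; that is, every invertible complex matrix has a square root that is a polynomial in the matrix. -/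
open Polynomial in
/-- Square root of `X` modulo a monic polynomial not vanishing at `0`. -/
theorem exists_sqrt_X_mod (p : ℂ[X]) (hp : p.Monic) (h0 : p.eval 0 ≠ 0) :
    ∃ f : ℂ[X], p ∣ f ^ 2 - X := by
  choose s hs using fun z : ℂ => IsAlgClosed.exists_pow_nat_eq z (n := 2) (by norm_num)
  let g : ℂ[X] := Lagrange.interpolate p.roots.toFinset id s
  have hg : ∀ a ∈ p.roots, g.eval a = s a := fun a ha =>
    Lagrange.eval_interpolate_at_node (v := id) s (Function.injective_id.injOn)
      (Multiset.mem_toFinset.mpr ha)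
  have hdvd : p ∣ (g ^ 2 - X) ^ p.roots.card := by
    have hsp : (p.roots.map fun a => X - C a).prod = p :=
      ((IsAlgClosed.splits p).eq_prod_roots_of_monic hp).symm
    have : (p.roots.map fun a => X - C a).prod ∣ (p.roots.map fun _ => (g ^ 2 - X)).prod := by
      apply Multiset.prod_dvd_prod_of_dvd
      intro a ha
      rw [dvd_iff_isRoot]
      simp [hg a ha, hs]
    rw [hsp] at this
    simpa using this
  have hmk : ∀ f : ℂ[X], AdjoinRoot.mk p f = 0 ↔ p ∣ f := fun f => AdjoinRoot.mk_eq_zero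
  have hnil : IsNilpotent (AdjoinRoot.mk p g ^ 2 - AdjoinRoot.root p) := by
    refine ⟨p.roots.card, ?_⟩
    rw [← AdjoinRoot.mk_X, ← map_pow, ← map_sub, ← map_pow, hmk]
    exact hdvd
  have hroot : IsUnit (AdjoinRoot.root p) := by
    obtain ⟨q, hq⟩ : X ∣ p - C (p.eval 0) := by
      rw [X_dvd_iff, coeff_zero_eq_eval_zero]; simp
    refine IsUnit.of_mul_eq_one (AdjoinRoot.mk p (q * C (-(p.eval 0)⁻¹))) ?_
    rw [← AdjoinRoot.mk_X, ← map_mul, ← map_one (AdjoinRoot.mk p), ← sub_eq_zero, ← map_sub, hmk]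
    refine ⟨C (-(p.eval 0)⁻¹), ?_⟩
    have hc : C (p.eval 0) * C (-(p.eval 0)⁻¹) = (-1 : ℂ[X]) := by
      rw [← C_mul]; simp [h0]
    linear_combination (-C (-(p.eval 0)⁻¹)) * hq - hc
  have hgu : IsUnit (AdjoinRoot.mk p g) := by
    have : IsUnit (AdjoinRoot.mk p g ^ 2) := by
      have := hnil.isUnit_add_left_of_commute hroot (Commute.all _ _)
      simpa using this
    exact (isUnit_pow_iff two_ne_zero).mp this
  have h2 : IsUnit (2 : AdjoinRoot p) := by
    have := (IsUnit.mk0 (2 : ℂ) two_ne_zero).map (algebraMap ℂ (AdjoinRoot p))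
    rwa [map_ofNat] at this
  obtain ⟨r, ⟨-, hr⟩, -⟩ := existsUnique_nilpotent_sub_and_aeval_eq_zero
    (P := (X ^ 2 - C (AdjoinRoot.root p) : (AdjoinRoot p)[X])) (x := AdjoinRoot.mk p g)
    (by simpa using hnil) (by simpa [one_add_one_eq_two] using And.intro h2 hgu)
  obtain ⟨f, rfl⟩ := AdjoinRoot.mk_surjective r
  refine ⟨f, ?_⟩
  rw [← hmk]
  simpa using hr

/-- Every nonsingular complex matrix has a square root that is a polynomial in the
matrix: for invertible `M ∈ ℂ^{n×n}` there is `f ∈ ℂ[x]` with `f(M)² = M`. -/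
theorem invertible_matrix_has_polynomial_sqrt (n : ℕ) (M : Matrix (Fin n) (Fin n) ℂ)
    (hM : IsUnit M) :
    ∃ f : Polynomial ℂ, (Polynomial.aeval M f) ^ 2 = M := by
  have h0 : M.charpoly.eval 0 ≠ 0 := by
    rw [Matrix.eval_charpoly]
    have h := (Matrix.isUnit_iff_isUnit_det M).mp hM
    simp [Matrix.det_neg, h.ne_zero]
  obtain ⟨f, q, hq⟩ := exists_sqrt_X_mod M.charpoly M.charpoly_monic h0
  refine ⟨f, ?_⟩
  have := congrArg (Polynomial.aeval M) hq
  simpa [Matrix.aeval_self_charpoly, sub_eq_zero] using this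
end
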